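/- For every A ⊆ ℕ, lim_{n→∞} sup_{k∈ℕ} μ_k(A \ {0,1,…,n}) = limsup_{k→∞} μ_k(A); that is, the exhaustive norm ‖A‖_φ = lim_n φ(A \ [0,n]) associated with φ(A) = sup_k μ_k(A) equals limsup_k μ_k(A). -/

import Mathlib

open Filter

/-- `mu F n A = |A ∩ F n| / |F n|`. -/
noncomputable def mu (F : ℕ → Finset ℕ) (n : ℕ) (A : Set ℕ) : ℝ :=
  (A ∩ (F n : Set ℕ)).ncard / (F n).card

lemma mu_nonneg' (F : ℕ → Finset ℕ) (n : ℕ) (A : Set ℕ) : 0 ≤ mu F n A := by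
  unfold mu; positivity

lemma mu_fin (F : ℕ → Finset ℕ) (n : ℕ) (A : Set ℕ) : (A ∩ (F n : Set ℕ)).Finite :=
  (F n).finite_toSet.subset Set.inter_subset_right

lemma mu_mono' (F : ℕ → Finset ℕ) (n : ℕ) {A B : Set ℕ} (h : A ⊆ B) : mu F n A ≤ mu F n B := by
  unfold mu
  have := Set.ncard_le_ncard (Set.inter_subset_inter_left (F n : Set ℕ) h) (mu_fin F n B)
  gcongr

lemma mu_le_one' (F : ℕ → Finset ℕ) (n : ℕ) (A : Set ℕ) : mu F n A ≤ 1 := by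
  unfold mu
  apply div_le_one_of_le₀ _ (by positivity)
  have := Set.ncard_le_ncard (Set.inter_subset_right (s := A)) (F n).finite_toSet
  rw [Set.ncard_coe_finset] at this
  exact_mod_cast this

lemma mu_split (F : ℕ → Finset ℕ) (k n : ℕ) (A : Set ℕ) :
    mu F k A ≤ mu F k (A \ Set.Iic n) + (n + 1 : ℝ) / (F k).card := by
  unfold mu
  rw [← add_div]
  have h1 : A ∩ (F k : Set ℕ) ⊆ ((A \ Set.Iic n) ∩ (F k : Set ℕ)) ∪ Set.Iic n := by
    intro x hx
    by_cases h : x ∈ Set.Iic n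
    · exact Or.inr h
    · exact Or.inl ⟨⟨hx.1, h⟩, hx.2⟩
  have h2 := Set.ncard_le_ncard h1 ((mu_fin F k _).union (Set.finite_Iic n))
  have h3 := h2.trans (Set.ncard_union_le _ _)
  have h4 : (Set.Iic n).ncard = n + 1 := by
    rw [← Finset.coe_Iic, Set.ncard_coe_finset, Nat.card_Iic]
  rw [h4] at h3
  have h5 : ((A ∩ (F k : Set ℕ)).ncard : ℝ) ≤
      ((A \ Set.Iic n) ∩ (F k : Set ℕ)).ncard + (n + 1 : ℝ) := by exact_mod_cast h3
  gcongr

/-- The exhaustive norm `‖A‖_φ = lim_n sup_k μ_k(A \ {0,…,n})` equals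
`limsup_k μ_k(A)`. -/
theorem stmt6 (F : ℕ → Finset ℕ) (hne : ∀ n, (F n).Nonempty)
    (hcard : Tendsto (fun n => (F n).card) atTop atTop) (A : Set ℕ) :
    Tendsto (fun n => ⨆ k, mu F k (A \ Set.Iic n)) atTop
      (nhds (limsup (fun k => mu F k A) atTop)) := by
  have hb : IsBoundedUnder (· ≤ ·) atTop (fun k => mu F k A) :=
    isBoundedUnder_of ⟨1, fun k => mu_le_one' F k A⟩
  have hb' : IsBoundedUnder (· ≥ ·) atTop (fun k => mu F k A) :=
    isBoundedUnder_of ⟨0, fun k => mu_nonneg' F k A⟩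
  have hbdd : ∀ n, BddAbove (Set.range fun k => mu F k (A \ Set.Iic n)) := by
    rintro n
    refine ⟨1, ?_⟩
    rintro _ ⟨k, rfl⟩
    exact mu_le_one' F k _
  set L := limsup (fun k => mu F k A) atTop with hL
  have hL0 : 0 ≤ L :=
    le_limsup_of_frequently_le (Eventually.of_forall fun k => mu_nonneg' F k A).frequently hb
  have lower : ∀ n, L ≤ ⨆ k, mu F k (A \ Set.Iic n) := by
    intro n
    apply le_of_forall_pos_le_add
    intro ε hε
    refine limsup_le_of_le hb'.isCoboundedUnder_le ?_
    have ht : Tendsto (fun k => (n + 1 : ℝ) / ((F k).card : ℝ)) atTop (nhds 0) :=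
      tendsto_const_nhds.div_atTop (tendsto_natCast_atTop_atTop.comp hcard)
    filter_upwards [ht.eventually_lt_const hε] with k hk
    have h1 := mu_split F k n A
    have h2 := le_ciSup (hbdd n) k
    linarith
  rw [tendsto_order]
  refine ⟨fun a ha => Eventually.of_forall fun n => ha.trans_le (lower n), fun a ha => ?_⟩
  obtain ⟨b, hLb, hba⟩ := exists_between ha
  obtain ⟨K, hK⟩ := eventually_atTop.1 (eventually_lt_of_limsup_lt hLb hb)
  filter_upwards [eventually_ge_atTop (((Finset.range K).biUnion F).sup id)] with n hn
  refine lt_of_le_of_lt (ciSup_le fun k => ?_) hba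
  by_cases hk : K ≤ k
  · exact (mu_mono' F k Set.sdiff_subset).trans (hK k hk).le
  · have : (A \ Set.Iic n) ∩ (F k : Set ℕ) = ∅ := by
      ext x
      simp only [Set.mem_inter_iff, Set.mem_sdiff, Set.mem_Iic, Finset.mem_coe,
        Set.mem_empty_iff_false, iff_false]
      rintro ⟨⟨_, h⟩, hx⟩
      apply h
      refine le_trans ?_ hn
      exact Finset.le_sup (f := id)
        (Finset.mem_biUnion.2 ⟨k, Finset.mem_range.2 (not_le.1 hk), hx⟩)
    have h0 : mu F k (A \ Set.Iic n) = 0 := by simp [mu, this]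
    rw [h0]; linarith
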